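/- Let k be a field, A = k[a_1,a_2], and let p, u be positive integers with p ≥ 3, u < p/2, and gcd(u,p) = 1. Let I = (a_1^p, a_2^p, a_1^u a_2^{p-u}). Run Euclid's algorithm on r_0 = p and r_1 = u: r_{i-1} = q_i r_i + r_{i+1} with 0 ≤ r_{i+1} < r_i for 1 ≤ i ≤ n-1, and r_n = 0 (so r_{n-1} = gcd(u,p) = 1). Define δ_0 = 0, δ_1 = 1, and δ_{i+1} = q_i δ_i + δ_{i-1} for 1 ≤ i ≤ n-1. Then the set of sifted degrees of I is SD(I) = ⋃_{i=1}^{n-1} {δ_{i-1} + j·δ_i : 1 ≤ j ≤ q_i}, a union of finite arithmetic progressions whose largest element is δ_n = p; consequently st(I) = q_1 + q_2 + ⋯ + q_{n-1} and rt(I) = p. -/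

import Mathlib

/-- The `A`-submodule of homogeneous elements of degree `n` in the kernel `L` of the
presentation `φ : A[X_1,…,X_r] → A[t]`, `X_i ↦ x_i t`, of the Rees algebra of the ideal
`I = (x_1,…,x_r)`; i.e. the degree-`n` equations `L_n` of the Rees algebra. -/
noncomputable def reesRel {A : Type*} [CommRing A] {r : ℕ} (x : Fin r → A) (n : ℕ) :
    Submodule A (MvPolynomial (Fin r) A) :=
  (RingHom.ker (MvPolynomial.aeval (fun i => Polynomial.C (x i) * Polynomial.X) :
      MvPolynomial (Fin r) A →ₐ[A] Polynomial A)).restrictScalars A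
  ⊓ MvPolynomial.homogeneousSubmodule (Fin r) A n

/-- `E(I)_n = 0`, i.e. `L_n = V_1·L_{n-1}`: the degree-`n` equations of the Rees algebra
are generated by those of degree `n-1`. -/
def reesRelStable {A : Type*} [CommRing A] {r : ℕ} (x : Fin r → A) (n : ℕ) : Prop :=
  reesRel x n = MvPolynomial.homogeneousSubmodule (Fin r) A 1 * reesRel x (n - 1)

/-- The set `SD(I) = {1} ∪ {n ≥ 2 : L_n ≠ V_1·L_{n-1}}` of sifted degrees. -/
def siftedDegrees {A : Type*} [CommRing A] {r : ℕ} (x : Fin r → A) : Set ℕ :=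
  {1} ∪ {n : ℕ | 2 ≤ n ∧ ¬ reesRelStable x n}

/-- The sifted type `st(I) = card SD(I)`. -/
noncomputable def siftedType {A : Type*} [CommRing A] {r : ℕ} (x : Fin r → A) : ℕ :=
  (siftedDegrees x).ncard

/-- The relation type `rt(I)`: the least `s ≥ 1` with `L_n = V_1·L_{n-1}` for all
`n ≥ s+1`. -/
noncomputable def relType {A : Type*} [CommRing A] {r : ℕ} (x : Fin r → A) : ℕ :=
  sInf {s : ℕ | 1 ≤ s ∧ ∀ n, s + 1 ≤ n → reesRelStable x n}

/-!
The equations of the Rees algebra of a monomial ideal are spanned by binomials whose two terms have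
the same image `a ^ N t ^ n`. So `L_n = V_1 L_{n-1}` if and only if, for every `N`, the graph on the
monomials of degree `n` over `a ^ N t ^ n`, with edges joining monomials that share an `X_i`, is
connected.

For `(a₁ ^ p, a₂ ^ p, a₁ ^ u a₂ ^ v)` with `u + v = p`, such a graph in degree `s ≥ 2` can only be
disconnected because `X_3 ^ s` is isolated from the monomials in `X_1, X_2`, and this occurs exactly
when `u s` modulo `p` is smaller, or larger, than all of `u t` modulo `p` with `0 < t < s`. Euclid's
algorithm produces these records: up to the sign of the second coordinate, `(δ i, r i)` and
`(δ (i + 1), -r (i + 1))` form a basis of the lattice of all `(x, z)` with `u x ≡ z` modulo `p`, and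
expanding lattice points in this basis shows that the records between `δ (i + 1)` and `δ (i + 2)`
are the numbers `δ i + j δ (i + 1)`.
-/

section ReesEquations

open MvPolynomial

variable {A : Type*} [CommRing A] {r : ℕ} {x : Fin r → A} {n : ℕ}

theorem aeval_C_mul_X_of_isHomogeneous (x : Fin r → A) {f : MvPolynomial (Fin r) A}
    (hf : f.IsHomogeneous n) :
    aeval (fun i => Polynomial.C (x i) * Polynomial.X) f =
      Polynomial.C (eval x f) * Polynomial.X ^ n := by
  simp only [aeval_def, eval₂_eq', eval_eq', map_sum, Finset.sum_mul]
  refine Finset.sum_congr rfl fun m hm => ?_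
  have hdeg : ∑ i, m i = n := by
    rw [← Finsupp.degree_eq_sum, Finsupp.degree_eq_weight_one]
    exact hf (mem_support_iff.mp hm)
  simp only [mul_pow, Finset.prod_mul_distrib, Finset.prod_pow_eq_pow_sum, hdeg, map_mul, map_prod,
    map_pow, mul_assoc, Polynomial.algebraMap_eq]

theorem mem_reesRel {f : MvPolynomial (Fin r) A} :
    f ∈ reesRel x n ↔ f.IsHomogeneous n ∧ eval x f = 0 := by
  rw [reesRel, Submodule.mem_inf, mem_homogeneousSubmodule, and_comm]
  refine and_congr_right fun hf => ?_
  rw [Submodule.restrictScalars_mem, RingHom.mem_ker, aeval_C_mul_X_of_isHomogeneous x hf,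
    Polynomial.C_mul_X_pow_eq_monomial, Polynomial.monomial_eq_zero_iff]

theorem homogeneousSubmodule_one_mul_reesRel_le (x : Fin r → A) (hn : 0 < n) :
    homogeneousSubmodule (Fin r) A 1 * reesRel x (n - 1) ≤ reesRel x n := by
  refine Submodule.mul_le.mpr fun l hl g hg => ?_
  obtain ⟨hg, hgx⟩ := mem_reesRel.mp hg
  refine mem_reesRel.mpr ⟨?_, by rw [map_mul, hgx, mul_zero]⟩
  simpa only [Nat.add_sub_cancel' hn] using ((mem_homogeneousSubmodule 1 l).mp hl).mul hg

theorem relType_eq_of_isGreatest_siftedDegrees {d : ℕ} (hd : IsGreatest (siftedDegrees x) d) :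
    relType x = d := by
  have one_le : 1 ≤ d := hd.2 (Or.inl rfl)
  refine IsLeast.csInf_eq ⟨⟨one_le, fun n hn => ?_⟩, fun s hs => ?_⟩
  · by_contra hstable
    exact absurd (hd.2 (Or.inr ⟨by lia, hstable⟩)) (by lia)
  · by_contra! hsd
    rcases hd.1 with rfl | ⟨-, hunstable⟩
    · exact absurd hs.1 (by lia)
    · exact hunstable (hs.2 d hsd)

end ReesEquations

section MonomialIdeals

open MvPolynomial

variable {σ k : Type*} [CommRing k] {r n : ℕ} {e : Fin r → σ →₀ ℕ}

/-- The exponents `m` of the monomials of degree `n` in `X_1, …, X_r` whose value at the monomials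
`a ^ e i` divides `a ^ N`. They index the monomials of `k[a][X]` that are mapped to `a ^ N t ^ n` by
the presentation of the Rees algebra of `(a ^ e 1, …, a ^ e r)`. -/
def reesFiber (e : Fin r → σ →₀ ℕ) (n : ℕ) (N : σ →₀ ℕ) : Set (Fin r →₀ ℕ) :=
  {m | m.degree = n ∧ Finsupp.weight e m ≤ N}

/-- The graph on a fiber of the presentation of the Rees algebra of a monomial ideal in which two
monomials are adjacent when they have a variable `X_i` in common. -/
def reesFiberGraph (e : Fin r → σ →₀ ℕ) (n : ℕ) (N : σ →₀ ℕ) : SimpleGraph (reesFiber e n N) :=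
  SimpleGraph.fromRel fun m m' => ∃ i, m.1 i ≠ 0 ∧ m'.1 i ≠ 0

/-- The monomial `a ^ (N - weight e m) X ^ m`: for `m` in the fiber over `a ^ N t ^ n`, it is the
element of the fiber with `X`-exponent `m`. -/
noncomputable def reesFiberMonomial (k : Type*) [CommRing k] (e : Fin r → σ →₀ ℕ) (N : σ →₀ ℕ)
    (m : Fin r →₀ ℕ) : MvPolynomial (Fin r) (MvPolynomial σ k) :=
  monomial m (monomial (N - Finsupp.weight e m) 1)

theorem reesFiberGraph_reachable_of_ne_zero {N : σ →₀ ℕ} {m m' : reesFiber e n N} (i : Fin r)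
    (hm : m.1 i ≠ 0) (hm' : m'.1 i ≠ 0) : (reesFiberGraph e n N).Reachable m m' := by
  by_cases h : m = m'
  · rw [h]
  · exact SimpleGraph.Adj.reachable ⟨h, Or.inl ⟨i, hm, hm'⟩⟩

theorem exists_ne_zero_of_reesFiberGraph_adj {N : σ →₀ ℕ} {m m' : reesFiber e n N}
    (h : (reesFiberGraph e n N).Adj m m') : ∃ i, m.1 i ≠ 0 ∧ m'.1 i ≠ 0 :=
  h.2.elim id fun ⟨i, hi', hi⟩ => ⟨i, hi, hi'⟩

theorem tsub_single_mem_reesFiber {N : σ →₀ ℕ} {m : Fin r →₀ ℕ} {i : Fin r}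
    (hm : m ∈ reesFiber e n N) (hi : m i ≠ 0) :
    m - Finsupp.single i 1 ∈ reesFiber e (n - 1) (N - e i) := by
  have hdeg := congrArg Finsupp.degree (Finsupp.sub_add_single_one_cancel hi)
  rw [map_add, Finsupp.degree_single, hm.1] at hdeg
  refine ⟨by lia, le_tsub_of_add_le_right ?_⟩
  rw [Finsupp.weight_sub_single_add hi]
  exact hm.2

theorem X_mul_reesFiberMonomial (N : σ →₀ ℕ) (m : Fin r →₀ ℕ) (i : Fin r) :
    X i * reesFiberMonomial k e N m =
      reesFiberMonomial k e (N + e i) (m + Finsupp.single i 1) := by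
  rw [reesFiberMonomial, reesFiberMonomial, map_add, Finsupp.weight_single, one_smul,
    add_tsub_add_eq_tsub_right, X, monomial_mul, one_mul, add_comm]

theorem eval_monomials_monomial (m : Fin r →₀ ℕ) (a : MvPolynomial σ k) :
    eval (fun i => monomial (e i) 1) (monomial m a) =
      a * monomial (Finsupp.weight e m) 1 := by
  simp only [eval_monomial, Finsupp.weight_apply, Finsupp.prod, Finsupp.sum, monomial_sum_one,
    monomial_pow, one_pow]

theorem eval_reesFiberMonomial {N : σ →₀ ℕ} {m : Fin r →₀ ℕ} (hm : Finsupp.weight e m ≤ N) :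
    eval (fun i => monomial (e i) 1) (reesFiberMonomial k e N m) = monomial N 1 := by
  rw [reesFiberMonomial, eval_monomials_monomial, monomial_mul, one_mul, tsub_add_cancel_of_le hm]

theorem reesFiberMonomial_sub_mem_reesRel {N : σ →₀ ℕ} {m m' : Fin r →₀ ℕ}
    (hm : m ∈ reesFiber e n N) (hm' : m' ∈ reesFiber e n N) :
    reesFiberMonomial k e N m - reesFiberMonomial k e N m' ∈
      reesRel (fun i => monomial (e i) (1 : k)) n :=
  mem_reesRel.mpr ⟨(isHomogeneous_monomial _ hm.1).sub (isHomogeneous_monomial _ hm'.1), by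
    rw [map_sub, eval_reesFiberMonomial hm.2, eval_reesFiberMonomial hm'.2, sub_self]⟩

theorem mem_span_reesFiberMonomial_of_isHomogeneous (e : Fin r → σ →₀ ℕ)
    {f : MvPolynomial (Fin r) (MvPolynomial σ k)} (hf : f.IsHomogeneous n) :
    f ∈ Submodule.span k {g | ∃ N, ∃ m ∈ reesFiber e n N, g = reesFiberMonomial k e N m} := by
  have monomial_eq_smul (m : Fin r →₀ ℕ) (b : σ →₀ ℕ) (c : k) :
      monomial m (monomial b c) = c • reesFiberMonomial k e (b + Finsupp.weight e m) m := by
    rw [reesFiberMonomial, add_tsub_cancel_right, smul_monomial, smul_monomial, smul_eq_mul,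
      mul_one]
  rw [f.as_sum]
  refine Submodule.sum_mem _ fun m hm => ?_
  rw [(coeff m f).as_sum, map_sum]
  refine Submodule.sum_mem _ fun b _ => ?_
  rw [monomial_eq_smul]
  refine Submodule.smul_mem _ _ (Submodule.subset_span ⟨_, m, ⟨?_, le_add_self⟩, rfl⟩)
  rw [Finsupp.degree_eq_weight_one]
  exact hf (mem_support_iff.mp hm)

/-- The degree-`n` binomials that relate two elements of one fiber. -/
def reesFiberBinomials (k : Type*) [CommRing k] (e : Fin r → σ →₀ ℕ) (n : ℕ) :
    Set (MvPolynomial (Fin r) (MvPolynomial σ k)) :=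
  {f | ∃ N, ∃ m ∈ reesFiber e n N, ∃ m' ∈ reesFiber e n N,
    f = reesFiberMonomial k e N m - reesFiberMonomial k e N m'}

theorem mem_span_reesFiberBinomials_of_mem_reesRel {f : MvPolynomial (Fin r) (MvPolynomial σ k)}
    (hf : f ∈ reesRel (fun i => monomial (e i) (1 : k)) n) :
    f ∈ Submodule.span k (reesFiberBinomials k e n) := by
  classical
  obtain ⟨hom, heval⟩ := mem_reesRel.mp hf
  -- Subtracting a `k`-linear lift of the value of `f` turns each term of `f` into a binomial.
  let rep (N : σ →₀ ℕ) : MvPolynomial (Fin r) (MvPolynomial σ k) :=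
    if h : (reesFiber e n N).Nonempty then reesFiberMonomial k e N h.some else 0
  let lift := (basisMonomials σ k).constr k rep
  have lift_monomial (N : σ →₀ ℕ) : lift (monomial N 1) = rep N := by
    rw [← (basisMonomials σ k).constr_basis k rep N, coe_basisMonomials]
  let evalₗ := (aeval (R := MvPolynomial σ k) fun i =>
    monomial (e i) (1 : k)).toLinearMap.restrictScalars k
  have sub_lift_eval_mem : f ∈ (Submodule.span k (reesFiberBinomials k e n)).comap
      (LinearMap.id - lift ∘ₗ evalₗ) := by
    refine Submodule.span_le.mpr ?_ (mem_span_reesFiberMonomial_of_isHomogeneous e hom)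
    rintro _ ⟨N, m, hm, rfl⟩
    have hN : (reesFiber e n N).Nonempty := ⟨m, hm⟩
    refine Submodule.subset_span ⟨N, m, hm, hN.some, hN.some_mem, ?_⟩
    have evalₗ_eq : evalₗ (reesFiberMonomial k e N m) = monomial N 1 :=
      eval_reesFiberMonomial hm.2
    simp only [LinearMap.sub_apply, LinearMap.id_apply, LinearMap.comp_apply, evalₗ_eq,
      lift_monomial, rep, dif_pos hN]
  have evalₗ_eq_zero : evalₗ f = 0 := heval
  simpa only [Submodule.mem_comap, LinearMap.sub_apply, LinearMap.id_apply, LinearMap.comp_apply,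
    evalₗ_eq_zero, map_zero, sub_zero] using sub_lift_eval_mem

theorem reesFiberMonomial_sub_mem_of_ne_zero {N : σ →₀ ℕ} {m m' : Fin r →₀ ℕ} {i : Fin r}
    (hm : m ∈ reesFiber e n N) (hm' : m' ∈ reesFiber e n N) (hi : m i ≠ 0) (hi' : m' i ≠ 0) :
    reesFiberMonomial k e N m - reesFiberMonomial k e N m' ∈
      homogeneousSubmodule (Fin r) (MvPolynomial σ k) 1 *
        reesRel (fun i => monomial (e i) 1) (n - 1) := by
  have le_N : e i ≤ N := by
    refine le_trans ?_ hm.2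
    rw [← Finsupp.weight_sub_single_add hi]
    exact le_add_self
  have eq_X_mul {l : Fin r →₀ ℕ} (hl : l i ≠ 0) :
      reesFiberMonomial k e N l =
        X i * reesFiberMonomial k e (N - e i) (l - Finsupp.single i 1) := by
    rw [X_mul_reesFiberMonomial, tsub_add_cancel_of_le le_N, Finsupp.sub_add_single_one_cancel hl]
  rw [eq_X_mul hi, eq_X_mul hi', ← mul_sub]
  exact Submodule.mul_mem_mul (isHomogeneous_X _ i) (reesFiberMonomial_sub_mem_reesRel
    (tsub_single_mem_reesFiber hm hi) (tsub_single_mem_reesFiber hm' hi'))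

theorem reesFiberMonomial_sub_mem_of_reachable {N : σ →₀ ℕ} {m m' : reesFiber e n N}
    (h : (reesFiberGraph e n N).Reachable m m') :
    reesFiberMonomial k e N m - reesFiberMonomial k e N m' ∈
      homogeneousSubmodule (Fin r) (MvPolynomial σ k) 1 *
        reesRel (fun i => monomial (e i) 1) (n - 1) := by
  rw [SimpleGraph.reachable_iff_reflTransGen] at h
  induction h with
  | refl => rw [sub_self]; exact Submodule.zero_mem _
  | @tail l l' _ hadj ih =>
    obtain ⟨i, hi, hi'⟩ := exists_ne_zero_of_reesFiberGraph_adj hadj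
    rw [← sub_add_sub_cancel _ (reesFiberMonomial k e N l)]
    exact Submodule.add_mem _ ih (reesFiberMonomial_sub_mem_of_ne_zero l.2 l'.2 hi hi')

/-- The `a ^ N`-coefficient of the value at the monomials `a ^ e i` of the part of a polynomial
supported on the `X`-exponents in `C`. If `C` is a connected component of the fiber over
`a ^ N t ^ n`, it separates `C` from the rest of the fiber and vanishes on `V_1 L_{n-1}`. -/
noncomputable def coeffEvalOn (k : Type*) [CommRing k] (e : Fin r → σ →₀ ℕ) (C : Set (Fin r →₀ ℕ))
    (N : σ →₀ ℕ) : MvPolynomial (Fin r) (MvPolynomial σ k) →ₗ[k] k :=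
  open Classical in
  lcoeff k N ∘ₗ ((basisMonomials (Fin r) (MvPolynomial σ k)).constr (MvPolynomial σ k) fun m =>
    if m ∈ C then monomial (Finsupp.weight e m) (1 : k) else 0).restrictScalars k

open Classical in
theorem coeffEvalOn_reesFiberMonomial {C : Set (Fin r →₀ ℕ)} {N N' : σ →₀ ℕ} {m : Fin r →₀ ℕ}
    (hm : Finsupp.weight e m ≤ N') :
    coeffEvalOn k e C N (reesFiberMonomial k e N' m) = if m ∈ C ∧ N' = N then 1 else 0 := by
  have monomial_eq : reesFiberMonomial k e N' m = monomial (N' - Finsupp.weight e m) (1 : k) •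
      basisMonomials (Fin r) (MvPolynomial σ k) m := by
    rw [coe_basisMonomials, smul_monomial, smul_eq_mul, mul_one, reesFiberMonomial]
  rw [coeffEvalOn, LinearMap.comp_apply, LinearMap.restrictScalars_apply, monomial_eq, map_smul,
    Module.Basis.constr_basis]
  by_cases hC : m ∈ C
  · simp [hC, monomial_mul, tsub_add_cancel_of_le hm, coeff_monomial]
  · simp [hC]

theorem coeffEvalOn_X_mul_eq_zero {C : Set (Fin r →₀ ℕ)} {N : σ →₀ ℕ} (hn : 0 < n)
    (hC : ∀ i, ∀ m ∈ reesFiber e n N, ∀ m' ∈ reesFiber e n N, m i ≠ 0 → m' i ≠ 0 → m ∈ C → m' ∈ C)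
    (i : Fin r) {g : MvPolynomial (Fin r) (MvPolynomial σ k)}
    (hg : g ∈ reesRel (fun i => monomial (e i) 1) (n - 1)) :
    coeffEvalOn k e C N (X i * g) = 0 := by
  classical
  suffices h : Submodule.span k (reesFiberBinomials k e (n - 1)) ≤
      LinearMap.ker (coeffEvalOn k e C N ∘ₗ LinearMap.mulLeft k (X i)) from
    h (mem_span_reesFiberBinomials_of_mem_reesRel hg)
  refine Submodule.span_le.mpr ?_
  rintro _ ⟨N', m, hm, m', hm', rfl⟩
  have add_single_mem {l : Fin r →₀ ℕ} (hl : l ∈ reesFiber e (n - 1) N') :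
      l + Finsupp.single i 1 ∈ reesFiber e n (N' + e i) := by
    refine ⟨?_, ?_⟩
    · rw [map_add, Finsupp.degree_single, hl.1, Nat.sub_add_cancel hn]
    · rw [map_add, Finsupp.weight_single, one_smul]
      exact add_le_add_left hl.2 _
  have add_single_ne_zero (l : Fin r →₀ ℕ) : (l + Finsupp.single i 1 : Fin r →₀ ℕ) i ≠ 0 := by
    simp
  have mem_iff : (m + Finsupp.single i 1 ∈ C ∧ N' + e i = N) ↔
      (m' + Finsupp.single i 1 ∈ C ∧ N' + e i = N) := by
    refine and_congr_left ?_
    rintro rfl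
    exact ⟨hC i _ (add_single_mem hm) _ (add_single_mem hm') (add_single_ne_zero m)
      (add_single_ne_zero m'), hC i _ (add_single_mem hm') _ (add_single_mem hm)
      (add_single_ne_zero m') (add_single_ne_zero m)⟩
  simp only [SetLike.mem_coe, LinearMap.mem_ker, LinearMap.comp_apply, LinearMap.mulLeft_apply,
    X_mul_reesFiberMonomial, map_sub]
  rw [coeffEvalOn_reesFiberMonomial (add_single_mem hm).2,
    coeffEvalOn_reesFiberMonomial (add_single_mem hm').2, if_congr mem_iff rfl rfl, sub_self]

theorem coeffEvalOn_eq_zero_of_mem {C : Set (Fin r →₀ ℕ)} {N : σ →₀ ℕ} (hn : 0 < n)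
    (hC : ∀ i, ∀ m ∈ reesFiber e n N, ∀ m' ∈ reesFiber e n N, m i ≠ 0 → m' i ≠ 0 → m ∈ C → m' ∈ C)
    {f : MvPolynomial (Fin r) (MvPolynomial σ k)}
    (hf : f ∈ homogeneousSubmodule (Fin r) (MvPolynomial σ k) 1 *
      reesRel (fun i => monomial (e i) 1) (n - 1)) :
    coeffEvalOn k e C N f = 0 := by
  induction hf using Submodule.mul_induction_on' with
  | add f _ g _ hf hg => rw [map_add, hf, hg, add_zero]
  | mem_mul_mem l hl g hg =>
    rw [homogeneousSubmodule_one_eq_span_X] at hl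
    induction hl using Submodule.span_induction generalizing g with
    | mem _ h =>
      obtain ⟨i, rfl⟩ := h
      exact coeffEvalOn_X_mul_eq_zero hn hC i hg
    | zero => rw [zero_mul, map_zero]
    | add l l' _ _ hl hl' => rw [add_mul, map_add, hl g hg, hl' g hg, add_zero]
    | smul a l _ hl =>
      rw [smul_mul_assoc, ← mul_smul_comm]
      exact hl _ (Submodule.smul_mem _ a hg)

theorem reesRel_le_of_preconnected (hconn : ∀ N, (reesFiberGraph e n N).Preconnected) :
    reesRel (fun i => monomial (e i) (1 : k)) n ≤
      homogeneousSubmodule (Fin r) (MvPolynomial σ k) 1 *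
        reesRel (fun i => monomial (e i) 1) (n - 1) := by
  intro f hf
  rw [← Submodule.restrictScalars_mem k]
  refine Submodule.span_le.mpr ?_ (mem_span_reesFiberBinomials_of_mem_reesRel hf)
  rintro _ ⟨N, m, hm, m', hm', rfl⟩
  exact reesFiberMonomial_sub_mem_of_reachable (m := ⟨m, hm⟩) (m' := ⟨m', hm'⟩) (hconn N _ _)

theorem reesRelStable_monomial_iff (k : Type*) [CommRing k] [Nontrivial k] (e : Fin r → σ →₀ ℕ)
    (hn : 0 < n) :
    reesRelStable (fun i => monomial (e i) (1 : k)) n ↔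
      ∀ N, (reesFiberGraph e n N).Preconnected := by
  classical
  refine ⟨fun hstable N m₀ m₁ => ?_, fun hconn =>
    le_antisymm (reesRel_le_of_preconnected hconn) (homogeneousSubmodule_one_mul_reesRel_le _ hn)⟩
  by_contra hsep
  let C : Set (Fin r →₀ ℕ) :=
    {m | ∃ h : m ∈ reesFiber e n N, (reesFiberGraph e n N).Reachable m₀ ⟨m, h⟩}
  have hzero : coeffEvalOn k e C N
      (reesFiberMonomial k e N m₀.1 - reesFiberMonomial k e N m₁.1) = 0 := by
    refine coeffEvalOn_eq_zero_of_mem hn ?_ (hstable ▸ reesFiberMonomial_sub_mem_reesRel m₀.2 m₁.2)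
    rintro i m - m' hm' hi hi' ⟨_, hreach⟩
    exact ⟨hm', hreach.trans (reesFiberGraph_reachable_of_ne_zero i hi hi')⟩
  have hm₀ : m₀.1 ∈ C := ⟨m₀.2, SimpleGraph.Reachable.refl _⟩
  have hm₁ : m₁.1 ∉ C := fun ⟨_, hreach⟩ => hsep hreach
  rw [map_sub, coeffEvalOn_reesFiberMonomial m₀.2.2, coeffEvalOn_reesFiberMonomial m₁.2.2,
    if_pos ⟨hm₀, rfl⟩, if_neg fun h => hm₁ h.1, sub_zero] at hzero
  exact one_ne_zero hzero

end MonomialIdeals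

section ResidueRecords

/-- The residue of `w * s` modulo `p` is smaller than those of `w * t` for all `0 < t < s`, that is,
`s` is a record of the sequence of these residues. -/
def IsResidueRecord (p w s : ℕ) : Prop :=
  ∀ t, 0 < t → t < s → w * s % p < w * t % p

/-- The multiples of `u` and `v` at which a new smallest residue modulo `p = u + v` is attained.
Since `v ≡ -u`, these are the `s` for which `u * s % p` is a new minimum or a new maximum. -/
def IsExtremeResidue (u v s : ℕ) : Prop :=
  IsResidueRecord (u + v) u s ∨ IsResidueRecord (u + v) v s

theorem IsExtremeResidue.symm {u v s : ℕ} (h : IsExtremeResidue u v s) :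
    IsExtremeResidue v u s := by
  rw [IsExtremeResidue, add_comm v u]
  exact Or.symm h

end ResidueRecords

section TrinomialIdeals

variable {u v s : ℕ}

/-- The exponents of the generators `a₁ ^ p`, `a₂ ^ p`, `a₁ ^ u * a₂ ^ v` of the ideal, where
`p = u + v`. -/
noncomputable def trinomialExponents (u v : ℕ) : Fin 3 → Fin 2 →₀ ℕ :=
  ![Finsupp.single 0 (u + v), Finsupp.single 1 (u + v), Finsupp.single 0 u + Finsupp.single 1 v]

theorem mem_reesFiber_trinomialExponents {N : Fin 2 →₀ ℕ} {m : Fin 3 →₀ ℕ} :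
    m ∈ reesFiber (trinomialExponents u v) s N ↔
      m 0 + m 1 + m 2 = s ∧ (u + v) * m 0 + u * m 2 ≤ N 0 ∧ (u + v) * m 1 + v * m 2 ≤ N 1 := by
  have weight_eq : Finsupp.weight (trinomialExponents u v) m =
      Finsupp.single 0 ((u + v) * m 0 + u * m 2) + Finsupp.single 1 ((u + v) * m 1 + v * m 2) := by
    rw [Finsupp.weight_apply, Finsupp.sum_fintype _ _ (by simp)]
    ext i
    fin_cases i <;> simp [Fin.sum_univ_three, trinomialExponents, add_mul, mul_comm (m _)]
  simp only [reesFiber, Set.mem_ofPred_eq, Finsupp.degree_eq_sum, Fin.sum_univ_three, weight_eq,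
    Finsupp.le_def, Fin.forall_fin_two]
  simp

theorem reachable_of_apply_two_eq_zero {N : Fin 2 →₀ ℕ} (hs : 2 ≤ s)
    {m m' : reesFiber (trinomialExponents u v) s N} (hm : m.1 2 < s) (hm' : m'.1 2 = 0) :
    (reesFiberGraph (trinomialExponents u v) s N).Reachable m m' := by
  obtain ⟨hdeg, h0, h1⟩ := mem_reesFiber_trinomialExponents.mp m.2
  obtain ⟨hdeg', h0', h1'⟩ := mem_reesFiber_trinomialExponents.mp m'.2
  by_cases hX₀ : m.1 0 ≠ 0 ∧ m'.1 0 ≠ 0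
  · exact reesFiberGraph_reachable_of_ne_zero 0 hX₀.1 hX₀.2
  by_cases hX₁ : m.1 1 ≠ 0 ∧ m'.1 1 ≠ 0
  · exact reesFiberGraph_reachable_of_ne_zero 1 hX₁.1 hX₁.2
  -- Otherwise one of the two has no `X_1` and the other no `X_2`; a monomial in both connects them.
  have mixed_mem (c d : ℕ) (hdeg : c + d = s) (hc : c ≤ m.1 0 ∨ c ≤ m'.1 0)
      (hd : d ≤ m.1 1 ∨ d ≤ m'.1 1) : Finsupp.equivFunOnFinite.symm ![c, d, 0] ∈
        reesFiber (trinomialExponents u v) s N := by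
    have hc' := hc.imp (Nat.mul_le_mul_left (u + v)) (Nat.mul_le_mul_left (u + v))
    have hd' := hd.imp (Nat.mul_le_mul_left (u + v)) (Nat.mul_le_mul_left (u + v))
    refine mem_reesFiber_trinomialExponents.mpr ⟨hdeg, ?_, ?_⟩
    · change (u + v) * c ≤ N 0
      lia
    · change (u + v) * d ≤ N 1
      lia
  by_cases hm₀ : m.1 0 = 0
  · exact (reesFiberGraph_reachable_of_ne_zero
      (m' := ⟨_, mixed_mem (s - 1) 1 (by lia) (by lia) (by lia)⟩) 1 (by lia) one_ne_zero).trans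
      (reesFiberGraph_reachable_of_ne_zero 0 (Nat.sub_ne_zero_of_lt hs) (by lia))
  · exact (reesFiberGraph_reachable_of_ne_zero
      (m' := ⟨_, mixed_mem 1 (s - 1) (by lia) (by lia) (by lia)⟩) 0 hm₀ one_ne_zero).trans
      (reesFiberGraph_reachable_of_ne_zero 1 (Nat.sub_ne_zero_of_lt hs) (by lia))

theorem exists_apply_two_lt_of_reachable {N : Fin 2 →₀ ℕ}
    {m m' : reesFiber (trinomialExponents u v) s N} (hm : m.1 2 = s) (hne : m ≠ m')
    (h : (reesFiberGraph (trinomialExponents u v) s N).Reachable m m') :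
    ∃ z ∈ reesFiber (trinomialExponents u v) s N, 0 < z 2 ∧ z 2 < s := by
  obtain ⟨walk⟩ := h
  cases walk with
  | nil => exact absurd rfl hne
  | @cons _ z _ hadj _ =>
    obtain ⟨hm_deg, -⟩ := mem_reesFiber_trinomialExponents.mp m.2
    obtain ⟨hz_deg, -⟩ := mem_reesFiber_trinomialExponents.mp z.2
    obtain ⟨i, hi, hi'⟩ := exists_ne_zero_of_reesFiberGraph_adj hadj
    have i_eq : i = 2 := by
      by_contra hi₂
      obtain rfl | rfl : i = 0 ∨ i = 1 := by lia
      · lia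
      · lia
    subst i_eq
    refine ⟨z, z.2, Nat.pos_of_ne_zero hi', ?_⟩
    by_contra! hz
    refine hadj.ne (Subtype.ext (Finsupp.ext (Fin.forall_fin_succ.mpr ⟨?_, ?_⟩)))
    · lia
    · exact Fin.forall_fin_two.mpr ⟨show m.1 1 = z.1 1 by lia, show m.1 2 = z.1 2 by lia⟩

theorem preconnected_trinomialExponents_iff {N : Fin 2 →₀ ℕ} (hs : 2 ≤ s) :
    (reesFiberGraph (trinomialExponents u v) s N).Preconnected ↔
      ∀ m ∈ reesFiber (trinomialExponents u v) s N, m 2 = s →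
        ∀ m' ∈ reesFiber (trinomialExponents u v) s N, m' 2 = 0 →
          ∃ z ∈ reesFiber (trinomialExponents u v) s N, 0 < z 2 ∧ z 2 < s := by
  refine ⟨fun hconn m hm hm₂ m' hm' hm'₂ => exists_apply_two_lt_of_reachable (m := ⟨m, hm⟩)
    (m' := ⟨m', hm'⟩) hm₂ (fun h => ?_) (hconn _ _), fun hmixed => ?_⟩
  · rw [Subtype.mk.injEq] at h
    lia
  · have reachable_of_eq_zero {m m' : reesFiber (trinomialExponents u v) s N} (hm' : m'.1 2 = 0) :
        (reesFiberGraph (trinomialExponents u v) s N).Reachable m m' := by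
      obtain ⟨hm_deg, -⟩ := mem_reesFiber_trinomialExponents.mp m.2
      by_cases hm : m.1 2 = s
      · obtain ⟨z, hz, hz_pos, hz_lt⟩ := hmixed m m.2 hm m' m'.2 hm'
        exact (reesFiberGraph_reachable_of_ne_zero (m' := ⟨z, hz⟩) 2 (by lia) hz_pos.ne').trans
          (reachable_of_apply_two_eq_zero hs hz_lt hm')
      · exact reachable_of_apply_two_eq_zero hs (by lia) hm'
    intro m m'
    by_cases hm : m.1 2 = 0
    · exact (reachable_of_eq_zero hm).symm
    by_cases hm' : m'.1 2 = 0
    · exact reachable_of_eq_zero hm'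
    · exact reesFiberGraph_reachable_of_ne_zero 2 hm hm'

theorem not_preconnected_trinomialExponents_iff {N : Fin 2 →₀ ℕ} (hs : 2 ≤ s) :
    ¬ (reesFiberGraph (trinomialExponents u v) s N).Preconnected ↔
      (u * s ≤ N 0 ∧ v * s ≤ N 1) ∧
      (∃ c d, c + d = s ∧ (u + v) * c ≤ N 0 ∧ (u + v) * d ≤ N 1) ∧
      ∀ c d t, c + d + t = s → 0 < t → t < s → (u + v) * c + u * t ≤ N 0 →
        N 1 < (u + v) * d + v * t := by
  have mk_mem (c d t : ℕ) : Finsupp.equivFunOnFinite.symm ![c, d, t] ∈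
      reesFiber (trinomialExponents u v) s N ↔
        c + d + t = s ∧ (u + v) * c + u * t ≤ N 0 ∧ (u + v) * d + v * t ≤ N 1 :=
    mem_reesFiber_trinomialExponents
  rw [preconnected_trinomialExponents_iff hs]
  push Not
  constructor
  · rintro ⟨m, hm, hm₂, m', hm', hm'₂, hmixed⟩
    obtain ⟨hdeg, h0, h1⟩ := mem_reesFiber_trinomialExponents.mp hm
    obtain ⟨hdeg', h0', h1'⟩ := mem_reesFiber_trinomialExponents.mp hm'
    rw [hm₂] at h0 h1
    refine ⟨⟨by lia, by lia⟩, ⟨m' 0, m' 1, by lia, by lia, by lia⟩, fun c d t hsum ht hts h => ?_⟩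
    by_contra! h'
    exact (hmixed _ ((mk_mem c d t).mpr ⟨hsum, h, h'⟩) ht).not_gt hts
  · rintro ⟨⟨hus, hvs⟩, ⟨c, d, hsum, hc, hd⟩, hmixed⟩
    refine ⟨_, (mk_mem 0 0 s).mpr ⟨by lia, by lia, by lia⟩, rfl, _,
      (mk_mem c d 0).mpr ⟨by lia, by lia, by lia⟩, rfl, fun z hz hz_pos => ?_⟩
    obtain ⟨hdeg, h0, h1⟩ := mem_reesFiber_trinomialExponents.mp hz
    by_contra! hz_lt
    exact (hmixed _ _ _ hdeg hz_pos hz_lt h0).not_ge h1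

theorem exchange_lt_iff {c d c' d' t : ℕ} (hsum : c + d = s) (hsum' : c' + d' + t = s) :
    (u + v) * d < (u + v) * d' + v * t ↔
      u * s + (u + v) * c' < u * (c' + d') + (u + v) * c := by
  subst hsum'
  have := congrArg ((u + v) * ·) hsum
  simp only [mul_add, add_mul] at this ⊢
  lia

theorem isResidueRecord_iff (hp : 0 < u + v) :
    IsResidueRecord (u + v) u s ↔
      ∃ c d, c + d = s ∧ (u + v) * c ≤ u * s ∧
        ∀ c' d' t, c' + d' + t = s → 0 < t → t < s → (u + v) * c' + u * t ≤ u * s →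
          (u + v) * d < (u + v) * d' + v * t := by
  have div_le (t : ℕ) : u * t / (u + v) ≤ t :=
    Nat.div_le_of_le_mul (Nat.mul_le_mul_right t (Nat.le_add_right u v))
  have sum_eq {t c : ℕ} (hc : c ≤ t) : c + (t - c) = t := Nat.add_sub_cancel' hc
  constructor
  · intro hrec
    refine ⟨u * s / (u + v), s - u * s / (u + v), sum_eq (div_le s), Nat.mul_div_le _ _,
      fun c' d' t hsum ht hts h => (exchange_lt_iff (sum_eq (div_le s)) hsum).mpr ?_⟩
    have hlt : u * s % (u + v) < u * (c' + d') % (u + v) := hrec _ (by lia) (by lia)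
    have hc' : (u + v) * c' ≤ (u + v) * (u * (c' + d') / (u + v)) := by
      refine Nat.mul_le_mul_left _ ((Nat.le_div_iff_mul_le hp).mpr ?_)
      subst hsum
      lia
    have := Nat.mod_add_div (u * s) (u + v)
    have := Nat.mod_add_div (u * (c' + d')) (u + v)
    lia
  · rintro ⟨c, d, hsum, hc, hmixed⟩ t ht hts
    have hsum' : u * t / (u + v) + (t - u * t / (u + v)) + (s - t) = s := by
      rw [sum_eq (div_le t), sum_eq hts.le]
    have hle : (u + v) * (u * t / (u + v)) + u * (s - t) ≤ u * s := by
      rw [← sum_eq hts.le, mul_add, Nat.add_sub_cancel_left]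
      exact Nat.add_le_add_right (Nat.mul_div_le _ _) _
    have hlt := (exchange_lt_iff hsum hsum').mp (hmixed _ _ _ hsum' (by lia) (by lia) hle)
    have hcs : (u + v) * c ≤ (u + v) * (u * s / (u + v)) :=
      Nat.mul_le_mul_left _ ((Nat.le_div_iff_mul_le hp).mpr (mul_comm c _ ▸ hc))
    rw [sum_eq (div_le t)] at hlt
    have := Nat.mod_add_div (u * t) (u + v)
    have := Nat.mod_add_div (u * s) (u + v)
    lia

theorem exists_not_preconnected_trinomialExponents_iff (hs : 2 ≤ s) (hp : 0 < u + v) :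
    (∃ N, ¬ (reesFiberGraph (trinomialExponents u v) s N).Preconnected) ↔
      IsExtremeResidue u v s := by
  have hp' : 0 < v + u := by lia
  rw [IsExtremeResidue, isResidueRecord_iff hp, add_comm u v, isResidueRecord_iff hp', add_comm v u]
  simp only [not_preconnected_trinomialExponents_iff hs]
  constructor
  · rintro ⟨N, ⟨hus, hvs⟩, ⟨c, d, hsum, hc, hd⟩, hmixed⟩
    by_cases hcs : (u + v) * c ≤ u * s
    · refine Or.inl ⟨c, d, hsum, hcs, fun c' d' t hsum' ht hts h => ?_⟩
      exact hd.trans_lt (hmixed c' d' t hsum' ht hts (h.trans hus))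
    · have hds : (u + v) * d ≤ v * s := by subst hsum; lia
      refine Or.inr ⟨d, c, by lia, hds, fun d' c' t hsum' ht hts h => ?_⟩
      by_contra! h'
      exact (hmixed c' d' t (by lia) ht hts (h'.trans hc)).not_ge (h.trans hvs)
  · have exists_eq (a b : ℕ) : ∃ N : Fin 2 →₀ ℕ, N 0 = a ∧ N 1 = b :=
      ⟨Finsupp.equivFunOnFinite.symm ![a, b], rfl, rfl⟩
    rintro (⟨c, d, hsum, hc, hmixed⟩ | ⟨d, c, hsum, hd, hmixed⟩)
    · obtain ⟨N, h0, h1⟩ := exists_eq (u * s) ((u + v) * d)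
      refine ⟨N, ?_⟩
      rw [h0, h1]
      exact ⟨⟨le_rfl, by subst hsum; lia⟩, ⟨c, d, hsum, hc, le_rfl⟩, hmixed⟩
    · obtain ⟨N, h0, h1⟩ := exists_eq ((u + v) * c) (v * s)
      refine ⟨N, ?_⟩
      rw [h0, h1]
      refine ⟨⟨by subst hsum; lia, le_rfl⟩, ⟨c, d, by lia, le_rfl, hd⟩,
        fun c' d' t hsum' ht hts h => ?_⟩
      by_contra! h'
      exact (hmixed d' c' t (by lia) ht hts h').not_ge h

end TrinomialIdeals

section ConvergentPairs

variable {u v s α β a b : ℕ}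

/-- The vectors `(α, a)` and `(β, -b)` lie in the lattice of all `(x, z)` with `u * x ≡ z` modulo
`p = u + v`, and form a basis of it. -/
structure ConvergentPair (u v α β a b : ℕ) : Prop where
  left : u * α ≡ a [MOD u + v]
  right : v * β ≡ b [MOD u + v]
  det : α * b + β * a = u + v

namespace ConvergentPair

theorem symm (h : ConvergentPair u v α β a b) : ConvergentPair v u β α b a where
  left := add_comm u v ▸ h.right
  right := add_comm u v ▸ h.left
  det := by rw [add_comm, h.det, add_comm]

theorem step (h : ConvergentPair u v α β (a + b) b) : ConvergentPair u v (α + β) β a b where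
  left := by
    refine Nat.ModEq.add_right_cancel h.right ?_
    calc u * (α + β) + v * β = u * α + (u + v) * β := by ring
      _ ≡ u * α [MOD u + v] := Nat.add_modulus_mul_modEq_iff.mpr rfl
      _ ≡ a + b [MOD u + v] := h.left
  right := h.right
  det := by rw [← h.det]; ring

theorem iterate {j : ℕ} (h : ConvergentPair u v α β (a + j * b) b) :
    ConvergentPair u v (α + j * β) β a b := by
  induction j generalizing a with
  | zero => simpa only [zero_mul, add_zero] using h
  | succ j ih =>
    rw [Nat.succ_mul, ← add_assoc]
    exact (ih (a := a + b) (by rwa [add_assoc, add_comm b, ← Nat.succ_mul])).step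

theorem exists_eq_combination (h : ConvergentPair u v α β a b) (hp : 0 < u + v) {t z : ℕ}
    (hz : u * t ≡ z [MOD u + v]) :
    ∃ x y : ℤ, (t : ℤ) = x * α + y * β ∧ (z : ℤ) = x * a - y * b := by
  obtain ⟨m, hm⟩ := hz.dvd
  obtain ⟨l, hl⟩ := h.left.dvd
  obtain ⟨l', hl'⟩ := h.right.dvd
  have hdet : (α * b + β * a : ℤ) = u + v := mod_cast h.det
  have hp' : (u + v : ℤ) ≠ 0 := mod_cast hp.ne'
  push_cast at hm hl hl'
  refine ⟨t * (l' + β) + β * m, t * l - α * m, mul_left_cancel₀ hp' ?_, mul_left_cancel₀ hp' ?_⟩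
  · linear_combination (-(t : ℤ)) * hdet + (t * α : ℤ) * hl' + t * β * hl
  · linear_combination
      (-(z : ℤ)) * hdet + (a * t : ℤ) * hl' - b * t * hl + (a * β + b * α : ℤ) * hm

-- Expand `(t, u * t % p)` in the basis `(α, a)`, `(β, -b)`: if its height is smaller than `a`, then
-- both coefficients are positive.
theorem le_mul_mod (h : ConvergentPair u v α β a b) (hb : 0 < b) {t : ℕ} (ht : 0 < t)
    (hts : t < α + β) : a ≤ u * t % (u + v) := by
  by_contra! hza
  have hdet : (α * b + β * a : ℤ) = u + v := mod_cast h.det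
  have hp : 0 < u + v := by
    have ha : 0 < a := by lia
    have : 0 < α ∨ 0 < β := by lia
    rw [← h.det]
    rcases this with hα | hβ <;> positivity
  obtain ⟨x, y, ht_eq, hz_eq⟩ := h.exists_eq_combination hp (Nat.mod_modEq (u * t) (u + v)).symm
  have hx : 0 < x := by
    refine pos_of_mul_pos_left (b := (u + v : ℤ)) ?_ (by positivity)
    calc (0 : ℤ) < b * t + β * (u * t % (u + v) : ℕ) := by positivity
      _ = x * (u + v) := by rw [← hdet, ht_eq, hz_eq]; ring
  have hy : 0 < y := by
    refine pos_of_mul_pos_left (b := (b : ℤ)) ?_ (by positivity)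
    rw [← Int.ofNat_lt, hz_eq] at hza
    nlinarith
  zify at hts
  nlinarith

theorem isResidueRecord (h : ConvergentPair u v α β (a + b) b) (hb : 0 < b) :
    IsResidueRecord (u + v) u (α + β) := by
  intro t ht hts
  calc u * (α + β) % (u + v) = a % (u + v) := h.step.left
    _ ≤ a := Nat.mod_le _ _
    _ < a + b := by lia
    _ ≤ u * t % (u + v) := h.le_mul_mod hb ht hts

theorem isExtremeResidue_add_mul {q j : ℕ} (h : ConvergentPair u v α β (a + q * b) b) (hb : 0 < b)
    (hj : 1 ≤ j) (hjq : j ≤ q) : IsExtremeResidue u v (α + j * β) := by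
  obtain ⟨j, rfl⟩ := Nat.exists_eq_add_of_le' hj
  obtain ⟨l, rfl⟩ := Nat.exists_eq_add_of_le' hjq
  rw [add_one_mul, ← add_assoc]
  refine Or.inl ((ConvergentPair.iterate (a := a + l * b + b) ?_).isResidueRecord hb)
  convert h using 1
  ring

theorem not_isResidueRecord (h : ConvergentPair u v α β a b) (hb : 0 < b) (hα : 0 < α)
    (hs : α < s) (hs' : s < α + β) : ¬ IsResidueRecord (u + v) u s := by
  intro hrec
  have hlt : u * s % (u + v) < a :=
    (hrec α hα hs).trans_le ((h.left : _ % _ = _).trans_le (Nat.mod_le _ _))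
  exact hlt.not_ge (h.le_mul_mod hb (by lia) hs')

theorem not_isExtremeResidue (h : ConvergentPair u v α β a b) (ha : 0 < a) (hb : 0 < b)
    (hα : α < s) (hβ : β < s) (hs : s < α + β) : ¬ IsExtremeResidue u v s := by
  rintro (hrec | hrec)
  · exact h.not_isResidueRecord hb (by lia) hα hs hrec
  · exact h.symm.not_isResidueRecord ha (by lia) hβ (by lia) (add_comm u v ▸ hrec)

theorem exists_eq_add_mul {q : ℕ} (h : ConvergentPair u v α β (a + q * b) b) (hb : 0 < b)
    (hα : α < s) (hβ : β < s) (hs : s ≤ α + q * β) (hrec : IsExtremeResidue u v s) :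
    ∃ j, 1 ≤ j ∧ j ≤ q ∧ s = α + j * β := by
  induction q generalizing α with
  | zero => lia
  | succ q ih =>
    have h' : ConvergentPair u v α β (a + q * b + b) b := by
      rwa [add_assoc, ← add_one_mul]
    rcases lt_trichotomy s (α + β) with hlt | rfl | hgt
    · exact absurd hrec (h'.not_isExtremeResidue (by lia) hb hα hβ hlt)
    · exact ⟨1, le_rfl, by lia, by rw [one_mul]⟩
    · obtain ⟨j, -, hjq, rfl⟩ := ih h'.step hgt (by lia)
      exact ⟨j + 1, by lia, by lia, by ring⟩

theorem le_of_isExtremeResidue (h : ConvergentPair u v α β a 0) (hβ : 0 < β)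
    (hrec : IsExtremeResidue u v s) : s ≤ β := by
  by_contra! hlt
  have mul_right : v * β % (u + v) = 0 := h.right
  have mul_left : u * β ≡ 0 [MOD u + v] := by
    refine Nat.ModEq.add_right_cancel h.right ?_
    rw [← add_mul, ← zero_add ((u + v) * β)]
    exact Nat.add_modulus_mul_modEq_iff.mpr rfl
  rcases hrec with hrec | hrec
  · exact Nat.not_lt_zero _ ((mul_left : _ % _ = _) ▸ hrec β hβ hlt)
  · exact Nat.not_lt_zero _ (mul_right ▸ hrec β hβ hlt)

end ConvergentPair

end ConvergentPairs

section EuclidRuns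

variable {u v n s : ℕ} {r q δ : ℕ → ℕ}

/-- A run of Euclid's algorithm on `p` and `u` that stops at `r n = 0`, with quotients
`q 1, …, q (n - 1)`, together with the numerators `δ` of the convergents of `p / u`. The
remainders are indexed so that no truncated subtraction occurs. -/
structure EuclidRun (p u n : ℕ) (r q δ : ℕ → ℕ) : Prop where
  r_zero : r 0 = p
  r_one : r 1 = u
  r_eq : ∀ i, i + 1 < n → r i = r (i + 2) + q (i + 1) * r (i + 1)
  r_lt : ∀ i, i + 1 < n → r (i + 2) < r (i + 1)
  r_last : r n = 0
  δ_zero : δ 0 = 0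
  δ_one : δ 1 = 1
  δ_add_two : ∀ i, i + 1 < n → δ (i + 2) = δ i + q (i + 1) * δ (i + 1)

/-- The progression of the numbers `δ i + j * δ (i + 1)` with `1 ≤ j ≤ q (i + 1)`. -/
def euclidProgression (q δ : ℕ → ℕ) (i : ℕ) : Finset ℕ :=
  (Finset.Icc 1 (q (i + 1))).image fun j => δ i + j * δ (i + 1)

theorem mem_euclidProgression {i : ℕ} :
    s ∈ euclidProgression q δ i ↔ ∃ j, 1 ≤ j ∧ j ≤ q (i + 1) ∧ s = δ i + j * δ (i + 1) := by
  simp only [euclidProgression, Finset.mem_image, Finset.mem_Icc, and_assoc, eq_comm]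

theorem coe_biUnion_euclidProgression (q δ : ℕ → ℕ) (n : ℕ) :
    (((Finset.range (n - 1)).biUnion (euclidProgression q δ) : Finset ℕ) : Set ℕ) =
      ⋃ i ∈ Set.Icc 1 (n - 1), (fun j => δ (i - 1) + j * δ i) '' Set.Icc 1 (q i) := by
  ext s
  simp only [Finset.mem_coe, Finset.mem_biUnion, Finset.mem_range, mem_euclidProgression,
    Set.mem_iUnion, Set.mem_image, Set.mem_Icc]
  constructor
  · rintro ⟨i, hi, j, hj, hjq, rfl⟩
    exact ⟨i + 1, ⟨by lia, by lia⟩, j, ⟨hj, hjq⟩, rfl⟩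
  · rintro ⟨i, ⟨hi, hin⟩, j, ⟨hj, hjq⟩, rfl⟩
    obtain ⟨i, rfl⟩ := Nat.exists_eq_add_of_le' hi
    exact ⟨i, by lia, j, hj, hjq, rfl⟩

namespace EuclidRun

theorem two_le {p : ℕ} (h : EuclidRun p u n r q δ) (hu : 0 < u) (hp : 0 < p) : 2 ≤ n := by
  by_contra! hn
  obtain rfl | rfl : n = 0 ∨ n = 1 := by lia
  · exact hp.ne' (h.r_zero.symm.trans h.r_last)
  · exact hu.ne' (h.r_one.symm.trans h.r_last)

theorem r_succ_pos {p i : ℕ} (h : EuclidRun p u n r q δ) (hi : i + 1 < n) : 0 < r (i + 1) :=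
  (Nat.zero_le _).trans_lt (h.r_lt i hi)

theorem q_succ_pos {p i : ℕ} (h : EuclidRun p u n r q δ) (hup : u ≤ p) (hi : i + 1 < n) :
    0 < q (i + 1) := by
  have r_le : r (i + 1) ≤ r i := by
    cases i with
    | zero => rwa [h.r_zero, h.r_one]
    | succ i => exact (h.r_lt i (by lia)).le
  have hlt := h.r_lt i hi
  have heq := h.r_eq i hi
  by_contra! hq
  rw [Nat.le_zero.mp hq, zero_mul, add_zero] at heq
  lia

theorem δ_add_δ_le {p i : ℕ} (h : EuclidRun p u n r q δ) (hup : u ≤ p) (hi : i + 1 < n) :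
    δ i + δ (i + 1) ≤ δ (i + 2) := by
  rw [h.δ_add_two i hi]
  exact Nat.add_le_add_left (Nat.le_mul_of_pos_left _ (h.q_succ_pos hup hi)) _

theorem δ_succ_pos {p i : ℕ} (h : EuclidRun p u n r q δ) (hup : u ≤ p) (hi : i < n) :
    0 < δ (i + 1) := by
  induction i with
  | zero => rw [h.δ_one]; exact one_pos
  | succ i ih => have := h.δ_add_δ_le hup hi; have := ih (by lia); lia

theorem δ_mono {p i j : ℕ} (h : EuclidRun p u n r q δ) (hup : u ≤ p) (hij : i ≤ j) (hj : j ≤ n) :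
    δ i ≤ δ j := by
  induction j, hij using Nat.le_induction with
  | base => exact le_rfl
  | succ j _ ih =>
    refine (ih (by lia)).trans ?_
    cases j with
    | zero => rw [h.δ_zero]; exact Nat.zero_le _
    | succ j => have := h.δ_add_δ_le hup hj; lia

theorem gcd_eq {p i : ℕ} (h : EuclidRun p u n r q δ) (hi : i < n) :
    Nat.gcd (r i) (r (i + 1)) = Nat.gcd u p := by
  induction i with
  | zero => rw [h.r_zero, h.r_one, Nat.gcd_comm]
  | succ i ih => rw [← ih (by lia), h.r_eq i hi, Nat.gcd_add_mul_right_left, Nat.gcd_comm]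

theorem convergentPair {i : ℕ} (h : EuclidRun (u + v) u n r q δ) (hi : i < n) :
    ConvergentPair u v (δ i) (δ (i + 1)) (r i) (r (i + 1)) ∨
      ConvergentPair v u (δ i) (δ (i + 1)) (r i) (r (i + 1)) := by
  induction i with
  | zero =>
    rw [h.δ_zero, h.δ_one, h.r_zero, h.r_one]
    refine Or.inr ⟨?_, ?_, by ring⟩
    · rw [mul_zero, add_comm]
      exact ((Nat.modEq_zero_iff_dvd).mpr dvd_rfl).symm
    · rw [mul_one]
  | succ i ih =>
    have step {u v : ℕ} (hi' : ConvergentPair u v (δ i) (δ (i + 1)) (r i) (r (i + 1))) :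
        ConvergentPair v u (δ (i + 1)) (δ (i + 2)) (r (i + 1)) (r (i + 2)) := by
      rw [h.r_eq i hi] at hi'
      rw [h.δ_add_two i hi]
      exact hi'.iterate.symm
    exact (ih (by lia)).symm.imp step step

theorem δ_mul_gcd (h : EuclidRun (u + v) u (n + 1) r q δ) :
    δ (n + 1) * Nat.gcd u (u + v) = u + v := by
  rw [← h.gcd_eq n.lt_succ_self, h.r_last, Nat.gcd_zero_right]
  rcases h.convergentPair n.lt_succ_self with hpair | hpair
  · rw [← hpair.det, h.r_last, mul_zero, zero_add]
  · rw [add_comm u, ← hpair.det, h.r_last, mul_zero, zero_add]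

theorem isExtremeResidue_of_mem (h : EuclidRun (u + v) u n r q δ) {i : ℕ} (hi : i + 1 < n)
    (hs : s ∈ euclidProgression q δ i) : IsExtremeResidue u v s := by
  obtain ⟨j, hj, hjq, rfl⟩ := mem_euclidProgression.mp hs
  have hpair := h.convergentPair (i := i) (by lia)
  rw [h.r_eq i hi] at hpair
  rcases hpair with hpair | hpair
  · exact hpair.isExtremeResidue_add_mul (h.r_succ_pos hi) hj hjq
  · exact (hpair.isExtremeResidue_add_mul (h.r_succ_pos hi) hj hjq).symm

theorem le_δ_of_isExtremeResidue (h : EuclidRun (u + v) u (n + 1) r q δ)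
    (hrec : IsExtremeResidue u v s) : s ≤ δ (n + 1) := by
  have hδ := h.δ_succ_pos (Nat.le_add_right u v) n.lt_succ_self
  have hpair := h.convergentPair n.lt_succ_self
  rw [h.r_last] at hpair
  rcases hpair with hpair | hpair
  · exact hpair.le_of_isExtremeResidue hδ hrec
  · exact hpair.le_of_isExtremeResidue hδ hrec.symm

theorem exists_mem_of_isExtremeResidue_of_le (h : EuclidRun (u + v) u n r q δ) (hs : 1 < s)
    (hrec : IsExtremeResidue u v s) {m : ℕ} (hm : m < n) (hsm : s ≤ δ (m + 1)) :
    ∃ i, i + 1 < n ∧ s ∈ euclidProgression q δ i := by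
  have hup : u ≤ u + v := Nat.le_add_right u v
  induction m with
  | zero => rw [h.δ_one] at hsm; lia
  | succ m ih =>
    by_cases hsm' : s ≤ δ (m + 1)
    · exact ih (by lia) hsm'
    refine ⟨m, hm, mem_euclidProgression.mpr ?_⟩
    have hle : δ m ≤ δ (m + 1) := h.δ_mono hup m.le_succ (by lia)
    have hpair := h.convergentPair (i := m) (by lia)
    rw [h.r_eq m hm] at hpair
    rw [h.δ_add_two m hm] at hsm
    rcases hpair with hpair | hpair
    · exact hpair.exists_eq_add_mul (h.r_succ_pos hm) (by lia) (by lia) (by lia) hrec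
    · exact hpair.exists_eq_add_mul (h.r_succ_pos hm) (by lia) (by lia) (by lia) hrec.symm

theorem mem_biUnion_iff (h : EuclidRun (u + v) u (n + 2) r q δ) :
    s ∈ (Finset.range (n + 1)).biUnion (euclidProgression q δ) ↔
      0 < s ∧ IsExtremeResidue u v s := by
  have hup : u ≤ u + v := Nat.le_add_right u v
  simp only [Finset.mem_biUnion, Finset.mem_range]
  constructor
  · rintro ⟨i, hi, hs⟩
    refine ⟨?_, h.isExtremeResidue_of_mem (by lia) hs⟩
    obtain ⟨j, hj, -, rfl⟩ := mem_euclidProgression.mp hs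
    have := h.δ_succ_pos (i := i) hup (by lia)
    positivity
  · rintro ⟨hs, hrec⟩
    rcases eq_or_lt_of_le (Nat.succ_le_of_lt hs) with rfl | hs
    · refine ⟨0, n.succ_pos, mem_euclidProgression.mpr ⟨1, le_rfl, ?_, ?_⟩⟩
      · exact h.q_succ_pos hup (by lia)
      · rw [h.δ_zero, h.δ_one]
    · obtain ⟨i, hi, hmem⟩ := h.exists_mem_of_isExtremeResidue_of_le hs hrec (Nat.lt_succ_self _)
        (h.le_δ_of_isExtremeResidue hrec)
      exact ⟨i, by lia, hmem⟩

theorem isGreatest_biUnion (h : EuclidRun (u + v) u (n + 2) r q δ) :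
    IsGreatest ((Finset.range (n + 1)).biUnion (euclidProgression q δ) : Set ℕ) (δ (n + 2)) := by
  refine ⟨Finset.mem_coe.mpr (Finset.mem_biUnion.mpr ⟨n, Finset.self_mem_range_succ n, ?_⟩),
    fun s hs => h.le_δ_of_isExtremeResidue (h.mem_biUnion_iff.mp hs).2⟩
  have lt_add_two : n + 1 < n + 2 := Nat.lt_succ_self _
  exact mem_euclidProgression.mpr
    ⟨_, h.q_succ_pos (Nat.le_add_right u v) lt_add_two, le_rfl, h.δ_add_two n lt_add_two⟩

theorem card_euclidProgression {p i : ℕ} (h : EuclidRun p u n r q δ) (hup : u ≤ p) (hi : i < n) :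
    (euclidProgression q δ i).card = q (i + 1) := by
  rw [euclidProgression, Finset.card_image_of_injective, Nat.card_Icc, Nat.add_sub_cancel]
  intro j j' hj
  exact Nat.eq_of_mul_eq_mul_right (h.δ_succ_pos hup hi) (Nat.add_left_cancel hj)

theorem lt_of_mem_euclidProgression {p i i' s' : ℕ} (h : EuclidRun p u n r q δ) (hup : u ≤ p)
    (hii' : i < i') (hi' : i' + 1 < n) (hs : s ∈ euclidProgression q δ i)
    (hs' : s' ∈ euclidProgression q δ i') : s < s' := by
  obtain ⟨j, -, hjq, rfl⟩ := mem_euclidProgression.mp hs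
  obtain ⟨j', hj', -, rfl⟩ := mem_euclidProgression.mp hs'
  obtain ⟨l, rfl⟩ := Nat.exists_eq_add_of_lt hii'
  calc δ i + j * δ (i + 1)
      ≤ δ i + q (i + 1) * δ (i + 1) := Nat.add_le_add_left (Nat.mul_le_mul_right _ hjq) _
    _ = δ (i + 2) := (h.δ_add_two i (by lia)).symm
    _ ≤ δ (i + l + 2) := h.δ_mono hup (by lia) (by lia)
    _ < δ (i + l + 1) + δ (i + l + 2) := Nat.lt_add_of_pos_left (h.δ_succ_pos hup (by lia))
    _ ≤ δ (i + l + 1) + j' * δ (i + l + 2) :=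
      Nat.add_le_add_left (Nat.le_mul_of_pos_left _ hj') _

theorem card_biUnion {p : ℕ} (h : EuclidRun p u n r q δ) (hup : u ≤ p) :
    ((Finset.range (n - 1)).biUnion (euclidProgression q δ)).card =
      ∑ i ∈ Finset.Icc 1 (n - 1), q i := by
  have disjoint_of_lt {i i' : ℕ} (hii' : i < i') (hi' : i' ∈ Finset.range (n - 1)) :
      Disjoint (euclidProgression q δ i) (euclidProgression q δ i') :=
    Finset.disjoint_left.mpr fun s hs hs' => (h.lt_of_mem_euclidProgression hup hii'
      (Nat.add_lt_of_lt_sub (Finset.mem_range.mp hi')) hs hs').false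
  rw [Finset.card_biUnion fun i hi i' hi' hne => hne.lt_or_gt.elim
    (fun hlt => disjoint_of_lt hlt hi') fun hgt => (disjoint_of_lt hgt hi).symm]
  calc ∑ i ∈ Finset.range (n - 1), (euclidProgression q δ i).card
      = ∑ i ∈ Finset.range (n - 1), q (i + 1) := Finset.sum_congr rfl fun i hi =>
        h.card_euclidProgression hup ((Finset.mem_range.mp hi).trans_le (Nat.sub_le n 1))
    _ = ∑ i ∈ Finset.Icc 1 (n - 1), q i := by
      rw [Finset.range_eq_Ico, Finset.sum_Ico_add' q, zero_add, Finset.Ico_add_one_right_eq_Icc]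

end EuclidRun

end EuclidRuns

section SiftedDegrees

theorem siftedDegrees_trinomial (k : Type*) [CommRing k] [Nontrivial k] {u v : ℕ}
    (hp : 0 < u + v) :
    siftedDegrees (fun i => MvPolynomial.monomial (trinomialExponents u v i) (1 : k)) =
      {s | 0 < s ∧ IsExtremeResidue u v s} := by
  have not_stable_iff {s : ℕ} (hs : 2 ≤ s) : ¬ reesRelStable (fun i =>
      MvPolynomial.monomial (trinomialExponents u v i) (1 : k)) s ↔ IsExtremeResidue u v s := by
    rw [reesRelStable_monomial_iff k _ (by lia), not_forall,
      exists_not_preconnected_trinomialExponents_iff hs hp]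
  have one_mem : IsExtremeResidue u v 1 := Or.inl fun t ht ht' => by lia
  ext s
  change s = 1 ∨ 2 ≤ s ∧ _ ↔ 0 < s ∧ _
  constructor
  · rintro (rfl | ⟨hs, hstable⟩)
    · exact ⟨one_pos, one_mem⟩
    · exact ⟨by lia, (not_stable_iff hs).mp hstable⟩
  · rintro ⟨hs, hrec⟩
    refine or_iff_not_imp_left.mpr fun hs1 => ?_
    have two_le : 2 ≤ s := by lia
    exact ⟨two_le, (not_stable_iff two_le).mpr hrec⟩

theorem monomial_trinomialExponents (k : Type*) [CommRing k] (u v : ℕ) :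
    (fun i => MvPolynomial.monomial (trinomialExponents u v i) (1 : k)) =
      ![MvPolynomial.X 0 ^ (u + v), MvPolynomial.X 1 ^ (u + v),
        MvPolynomial.X 0 ^ u * MvPolynomial.X 1 ^ v] := by
  funext i
  fin_cases i <;> simp [trinomialExponents, MvPolynomial.X_pow_eq_monomial]

end SiftedDegrees

theorem stmt_18_general {k : Type*} [CommRing k] [Nontrivial k] {p u n : ℕ} {r q δ : ℕ → ℕ}
    (hu : 0 < u) (hup : u ≤ p) (h : EuclidRun p u n r q δ) :
    let a₁ : MvPolynomial (Fin 2) k := MvPolynomial.X 0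
    let a₂ : MvPolynomial (Fin 2) k := MvPolynomial.X 1
    let x : Fin 3 → MvPolynomial (Fin 2) k := ![a₁ ^ p, a₂ ^ p, a₁ ^ u * a₂ ^ (p - u)]
    siftedDegrees x =
      ⋃ i ∈ Set.Icc 1 (n - 1), (fun j => δ (i - 1) + j * δ i) '' Set.Icc 1 (q i) ∧
    IsGreatest (siftedDegrees x) (δ n) ∧ δ n * Nat.gcd u p = p ∧
    siftedType x = ∑ i ∈ Finset.Icc 1 (n - 1), q i ∧
    relType x = δ n := by
  intro a₁ a₂ x
  obtain ⟨v, rfl⟩ := Nat.exists_eq_add_of_le hup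
  obtain ⟨n, rfl⟩ := Nat.exists_eq_add_of_le' (h.two_le hu (Nat.add_pos_left hu v))
  have siftedDegrees_eq :
      siftedDegrees x = (Finset.range (n + 1)).biUnion (euclidProgression q δ) := by
    have x_eq : x = fun i => MvPolynomial.monomial (trinomialExponents u v i) 1 := by
      rw [monomial_trinomialExponents]
      simp only [x, a₁, a₂, Nat.add_sub_cancel_left]
    rw [x_eq, siftedDegrees_trinomial k (Nat.add_pos_left hu v)]
    exact Set.ext fun s => h.mem_biUnion_iff.symm
  have isGreatest : IsGreatest (siftedDegrees x) (δ (n + 2)) :=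
    siftedDegrees_eq ▸ h.isGreatest_biUnion
  refine ⟨siftedDegrees_eq.trans (coe_biUnion_euclidProgression q δ (n + 2)), isGreatest,
    h.δ_mul_gcd, ?_, relType_eq_of_isGreatest_siftedDegrees isGreatest⟩
  rw [siftedType, siftedDegrees_eq, Set.ncard_coe_finset]
  exact h.card_biUnion hup

/-- Let `A = k[a₁,a₂]`, `p ≥ 3`, `0 < u < p/2`, `gcd(u,p) = 1`, and
`I = (a₁^p, a₂^p, a₁^u a₂^{p-u})`. Run Euclid's algorithm on `r₀ = p`, `r₁ = u`:
`r_{i-1} = qᵢrᵢ + r_{i+1}`, `r_{i+1} < rᵢ` for `1 ≤ i ≤ n-1`, and `rₙ = 0`. Define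
`δ₀ = 0`, `δ₁ = 1`, `δ_{i+1} = qᵢδᵢ + δ_{i-1}`. Then
`SD(I) = ⋃_{i=1}^{n-1} {δ_{i-1} + j·δᵢ : 1 ≤ j ≤ qᵢ}`, whose largest element is
`δₙ = p`; consequently `st(I) = q₁ + ⋯ + q_{n-1}` and `rt(I) = p`. -/
theorem stmt_18 {k : Type*} [Field k] (p u : ℕ) (hp : 3 ≤ p) (hu : 0 < u)
    (hup : 2 * u < p) (hgcd : Nat.gcd u p = 1)
    (n : ℕ) (hn : 2 ≤ n) (r q : ℕ → ℕ) (hr0 : r 0 = p) (hr1 : r 1 = u)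
    (hdiv : ∀ i, 1 ≤ i → i ≤ n - 1 → r (i - 1) = q i * r i + r (i + 1))
    (hlt : ∀ i, 1 ≤ i → i ≤ n - 1 → r (i + 1) < r i)
    (hrn : r n = 0)
    (δ : ℕ → ℕ) (hδ0 : δ 0 = 0) (hδ1 : δ 1 = 1)
    (hδ : ∀ i, 1 ≤ i → i ≤ n - 1 → δ (i + 1) = q i * δ i + δ (i - 1)) :
    let a₁ : MvPolynomial (Fin 2) k := MvPolynomial.X 0
    let a₂ : MvPolynomial (Fin 2) k := MvPolynomial.X 1
    let x : Fin 3 → MvPolynomial (Fin 2) k := ![a₁ ^ p, a₂ ^ p, a₁ ^ u * a₂ ^ (p - u)]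
    siftedDegrees x =
      ⋃ i ∈ Set.Icc 1 (n - 1), (fun j => δ (i - 1) + j * δ i) '' Set.Icc 1 (q i) ∧
    (∀ d ∈ siftedDegrees x, d ≤ δ n) ∧ δ n ∈ siftedDegrees x ∧ δ n = p ∧
    siftedType x = ∑ i ∈ Finset.Icc 1 (n - 1), q i ∧
    relType x = p := by
  intro a₁ a₂ x
  obtain ⟨hsd, hmax, hδn, hst, hrt⟩ := stmt_18_general (k := k) hu (by lia : u ≤ p)
    (⟨hr0, hr1, fun i hi => (hdiv (i + 1) (by lia) (by lia)).trans (add_comm _ _),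
      fun i hi => hlt (i + 1) (by lia) (by lia), hrn, hδ0, hδ1,
      fun i hi => (hδ (i + 1) (by lia) (by lia)).trans (add_comm _ _)⟩ : EuclidRun p u n r q δ)
  rw [hgcd, mul_one] at hδn
  exact ⟨hsd, hmax.2, hmax.1, hδn, hst, hrt.trans hδn⟩
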